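/- arXiv:1404.7348 — 2 statements merged into one kernel-verified Lean document; each statement's English description precedes it below -/
import Mathlib

section
/- Let G ~ G(n,p) be the Erdős–Rényi random graph on n labelled vertices with edge probability p, and let χ(G) denote its chromatic number. Then for any λ > 0, Pr[|χ(G) - E[χ(G)]| > λ√(n-1)] < 2·exp(-λ²/2). -/
open MeasureTheory

/-- The Bernoulli measure on `Bool` with success probability `p`. -/
noncomputable def bernoulliMeasure (p : ℝ) : Measure Bool :=
  ENNReal.ofReal p • Measure.dirac true + ENNReal.ofReal (1 - p) • Measure.dirac false

/-- The Erdős–Rényi measure `G(n,p)`: each potential edge is present independently with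
probability `p`, encoded as a product measure on edge indicator functions. -/
noncomputable def gnp (n : ℕ) (p : ℝ) : Measure (Sym2 (Fin n) → Bool) :=
  Measure.pi fun _ => bernoulliMeasure p

/-- The simple graph determined by an edge indicator function. -/
def graphOf {n : ℕ} (ω : Sym2 (Fin n) → Bool) : SimpleGraph (Fin n) :=
  SimpleGraph.fromRel fun u v => ω s(u, v) = true

/-- The chromatic number of the graph determined by `ω`, as a real number. -/
noncomputable def chi {n : ℕ} (ω : Sym2 (Fin n) → Bool) : ℝ :=
  ((graphOf ω).chromaticNumber.toNat : ℝ)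

/-!
Expose the vertices of `G(n, p)` one at a time, each with its edges to the earlier vertices. As
recolouring one vertex with a fresh colour repairs a colouring after a change of its edges, every
exposure moves the conditional expectation of the chromatic number within an interval of length `1`,
and the first exposure reveals nothing. Hoeffding's lemma at each of the remaining `n - 1` steps
makes the deviation from the mean sub-Gaussian with variance proxy `(n - 1) / 4`.

The conditional expectations are computed on the product space: the coordinates that are not yet
exposed are averaged over an independent copy.
-/

open Real
open ProbabilityTheory (HasSubgaussianMGF IdentDistrib hasSubgaussianMGF_of_mem_Icc mgf)
open scoped NNReal

section SubGaussian

variable {α β : Type*} [MeasurableSpace α] [MeasurableSpace β] {μ : Measure α} {ν : Measure β}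

theorem measureReal_mul_sqrt_lt_abs_le_of_hasSubgaussianMGF [IsFiniteMeasure μ] {X : α → ℝ}
    {c : ℝ≥0} (hX : HasSubgaussianMGF X c μ) {r : ℝ} (hr : 0 ≤ r) :
    μ.real {ω | r * √c < |X ω|} ≤ 2 * exp (-r ^ 2 / 2) := by
  rcases eq_or_ne c 0 with rfl | hc
  · have hnull : μ {ω | r * √((0 : ℝ≥0) : ℝ) < |X ω|} = 0 :=
      measure_mono_null (fun ω hω => by simpa using hω)
        (ae_iff.1 hX.ae_eq_zero_of_hasSubgaussianMGF_zero)
    rw [measureReal_def, hnull, ENNReal.toReal_zero]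
    positivity
  · have hexponent : -(r * √c) ^ 2 / (2 * c) = -r ^ 2 / 2 := by
      rw [mul_pow, Real.sq_sqrt c.coe_nonneg]
      field
    have hupper := hX.measure_ge_le (ε := r * √c) (by positivity)
    have hlower := hX.neg.measure_ge_le (ε := r * √c) (by positivity)
    rw [hexponent] at hupper hlower
    have hcover : {ω | r * √c < |X ω|} ⊆ {ω | r * √c ≤ X ω} ∪ {ω | r * √c ≤ (-X) ω} := by
      intro ω hω
      simp only [Set.mem_union, Set.mem_ofPred_eq, Pi.neg_apply, lt_abs] at hω ⊢
      exact hω.imp le_of_lt le_of_lt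
    calc μ.real {ω | r * √c < |X ω|}
        ≤ μ.real ({ω | r * √c ≤ X ω} ∪ {ω | r * √c ≤ (-X) ω}) := measureReal_mono hcover
      _ ≤ μ.real {ω | r * √c ≤ X ω} + μ.real {ω | r * √c ≤ (-X) ω} := measureReal_union_le _ _
      _ ≤ 2 * exp (-r ^ 2 / 2) := by linarith

theorem integrable_of_abs_sub_le [IsFiniteMeasure μ] {f : α → ℝ} {c : ℝ}
    (hm : AEStronglyMeasurable f μ) (hf : ∀ x y, |f x - f y| ≤ c) : Integrable f μ := by
  rcases isEmpty_or_nonempty α with _ | ⟨⟨x₀⟩⟩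
  · exact .of_isEmpty
  · refine .of_bound hm (c + |f x₀|) (.of_forall fun x => ?_)
    rw [Real.norm_eq_abs]
    linarith [hf x x₀, abs_sub_abs_le_abs_sub (f x) (f x₀)]

theorem hasSubgaussianMGF_of_abs_sub_le [IsProbabilityMeasure μ] {f : α → ℝ} {c : ℝ≥0}
    (hm : AEMeasurable f μ) (hf : ∀ x y, |f x - f y| ≤ c) :
    HasSubgaussianMGF (fun x => f x - ∫ x', f x' ∂μ) ((c / 2) ^ 2) μ := by
  obtain ⟨x₀⟩ := nonempty_of_isProbabilityMeasure μ
  have : Nonempty α := ⟨x₀⟩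
  have hle (x y : α) : f x ≤ f y + c := by linarith [(abs_le.1 (hf x y)).2]
  have hbdd : BddBelow (Set.range f) :=
    ⟨f x₀ - c, Set.forall_mem_range.2 fun x => by linarith [hle x₀ x]⟩
  have hmem (x : α) : f x ∈ Set.Icc (⨅ y, f y) ((⨅ y, f y) + c) :=
    ⟨ciInf_le hbdd x, by linarith [le_ciInf fun y => sub_le_iff_le_add.2 (hle x y)]⟩
  simpa using hasSubgaussianMGF_of_mem_Icc hm (.of_forall hmem)

theorem hasSubgaussianMGF_prod [SFinite μ] [SFinite ν] {X : α × β → ℝ} {Y : α → ℝ} {a b : ℝ≥0}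
    (hm : AEStronglyMeasurable X (μ.prod ν)) (hY : HasSubgaussianMGF Y a μ)
    (hX : ∀ᵐ x ∂μ, HasSubgaussianMGF (fun y => X (x, y) - Y x) b ν) :
    HasSubgaussianMGF X (a + b) (μ.prod ν) := by
  have hsplit (t : ℝ) (x : α) (y : β) :
      exp (t * X (x, y)) = exp (t * (X (x, y) - Y x)) * exp (t * Y x) := by
    rw [← exp_add]
    ring_nf
  have hfiber (t : ℝ) : ∀ᵐ x ∂μ,
      ∫ y, exp (t * X (x, y)) ∂ν ≤ exp (b * t ^ 2 / 2) * exp (t * Y x) := by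
    filter_upwards [hX] with x hx
    simp_rw [hsplit, integral_mul_const]
    gcongr
    exact hx.mgf_le t
  have hdom (t : ℝ) := (hY.integrable_exp_mul t).const_mul (exp (b * t ^ 2 / 2))
  have hint (t : ℝ) : Integrable (fun z => exp (t * X z)) (μ.prod ν) := by
    have hexp : AEStronglyMeasurable (fun z => exp (t * X z)) (μ.prod ν) :=
      continuous_exp.comp_aestronglyMeasurable (hm.const_mul t)
    rw [integrable_prod_iff hexp]
    refine ⟨?_, (hdom t).mono' hexp.norm.integral_prod_right' ?_⟩
    · filter_upwards [hX] with x hx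
      simpa only [hsplit] using (hx.integrable_exp_mul t).mul_const _
    · filter_upwards [hfiber t] with x hx
      have hnonneg : 0 ≤ ∫ y, exp (t * X (x, y)) ∂ν := integral_nonneg fun y => exp_nonneg _
      simpa only [norm_eq_abs, abs_exp, abs_of_nonneg hnonneg] using hx
  refine ⟨hint, fun t => ?_⟩
  calc mgf X (μ.prod ν) t
      = ∫ x, ∫ y, exp (t * X (x, y)) ∂ν ∂μ := integral_prod _ (hint t)
    _ ≤ ∫ x, exp (b * t ^ 2 / 2) * exp (t * Y x) ∂μ :=
        integral_mono_ae (hint t).integral_prod_left (hdom t) (hfiber t)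
    _ = exp (b * t ^ 2 / 2) * mgf Y μ t := integral_const_mul _ _
    _ ≤ exp (b * t ^ 2 / 2) * exp (a * t ^ 2 / 2) := by gcongr; exact hY.mgf_le t
    _ = exp ((a + b : ℝ≥0) * t ^ 2 / 2) := by rw [← exp_add]; push_cast; ring_nf

end SubGaussian

section BoundedDifferences

variable {ι κ : Type*} {Ω : ι → Type*}

/-- The bounded-differences condition on a function of independent coordinates that are grouped
into blocks, `b i` being the block of the coordinate `i`: altering coordinates of the block `j`
alone changes the value of `f` by at most `c j`. -/
def HasBoundedDifferences (b : ι → κ) (f : (∀ i, Ω i) → ℝ) (c : κ → ℝ≥0) : Prop :=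
  ∀ j x y, (∀ i, b i ≠ j → x i = y i) → |f x - f y| ≤ c j

variable {b : ι → κ} {f : (∀ i, Ω i) → ℝ} {c : κ → ℝ≥0}

theorem HasBoundedDifferences.abs_sub_le_sum [Fintype κ] (hf : HasBoundedDifferences b f c)
    (x y : ∀ i, Ω i) : |f x - f y| ≤ ∑ j, (c j : ℝ) := by
  classical
  suffices h : ∀ (s : Finset κ) (x y : ∀ i, Ω i), (∀ i, b i ∉ s → x i = y i) →
      |f x - f y| ≤ ∑ j ∈ s, (c j : ℝ) from h _ x y (by simp)
  intro s
  induction s using Finset.induction_on with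
  | empty =>
    intro x y hxy
    simp [show x = y from funext fun i => hxy i (by simp)]
  | insert j s hj ih =>
    intro x y hxy
    let z := (b ⁻¹' {j}).piecewise y x
    have hxz : |f x - f z| ≤ c j := hf j x z fun i hi => by simp [z, hi]
    have hzy : |f z - f y| ≤ ∑ j ∈ s, (c j : ℝ) := ih z y fun i hi => by
      by_cases hij : b i = j
      · simp [z, hij]
      · simpa [z, hij] using hxy i (by simp [hij, hi])
    rw [Finset.sum_insert hj]
    exact (abs_sub_le _ (f z) _).trans (add_le_add hxz hzy)

variable [∀ i, MeasurableSpace (Ω i)]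

theorem HasBoundedDifferences.integrable_comp [Finite κ] {α : Type*} [MeasurableSpace α]
    {P : Measure α} [IsFiniteMeasure P] (hf : HasBoundedDifferences b f c) (hm : Measurable f)
    {g : α → ∀ i, Ω i} (hg : Measurable g) : Integrable (f ∘ g) P := by
  cases nonempty_fintype κ
  exact integrable_of_abs_sub_le (hm.comp hg).aestronglyMeasurable
    fun _ _ => hf.abs_sub_le_sum _ _

open Classical in
theorem measurable_piecewise_prod (S : Set ι) :
    Measurable fun z : (∀ i, Ω i) × (∀ i, Ω i) => S.piecewise z.2 z.1 := by
  refine measurable_pi_lambda _ fun i => ?_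
  by_cases hi : i ∈ S <;> simp only [Set.piecewise, hi, if_true, if_false] <;> fun_prop

variable [Fintype ι] {μ : ∀ i, Measure (Ω i)}

variable (μ) in
/-- The average of `f` over independent copies of the coordinates in `S`, as a function of the
remaining coordinates: the conditional expectation of `f` given the coordinates outside `S`. -/
noncomputable def resampledMean (S : Set ι) (f : (∀ i, Ω i) → ℝ) (x : ∀ i, Ω i) : ℝ :=
  open Classical in ∫ y, f (S.piecewise y x) ∂Measure.pi μ

theorem dependsOn_resampledMean {S T : Set ι} (hf : DependsOn f (S ∪ T)) :
    DependsOn (resampledMean μ S f) T := by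
  classical
  intro x y hxy
  refine integral_congr_ae (.of_forall fun z => hf fun i hi => ?_)
  by_cases hiS : i ∈ S
  · simp [hiS]
  · simpa [hiS] using hxy i (hi.resolve_left hiS)

variable [∀ i, IsProbabilityMeasure (μ i)]

variable (μ) in
open Classical in
theorem measurePreserving_piecewise (S : Set ι) :
    MeasurePreserving (fun z : (∀ i, Ω i) × (∀ i, Ω i) => S.piecewise z.2 z.1)
      ((Measure.pi μ).prod (Measure.pi μ)) (Measure.pi μ) := by
  refine ⟨measurable_piecewise_prod S, (Measure.pi_eq fun s hs => ?_).symm⟩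
  have hpre : (fun z : (∀ i, Ω i) × (∀ i, Ω i) => S.piecewise z.2 z.1) ⁻¹' Set.univ.pi s =
      Set.univ.pi (fun i => if i ∈ S then Set.univ else s i) ×ˢ
        Set.univ.pi (fun i => if i ∈ S then s i else Set.univ) := by
    ext z
    simp only [Set.mem_preimage, Set.mem_univ_pi, Set.mem_prod, ← forall_and]
    refine forall_congr' fun i => ?_
    by_cases hi : i ∈ S <;> simp [hi]
  rw [Measure.map_apply (measurable_piecewise_prod S) (.univ_pi hs), hpre, Measure.prod_prod,
    Measure.pi_pi, Measure.pi_pi, ← Finset.prod_mul_distrib]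
  refine Finset.prod_congr rfl fun i _ => ?_
  by_cases hi : i ∈ S <;> simp [hi]

theorem integral_resampledMean (S : Set ι) (hf : Integrable f (Measure.pi μ)) :
    ∫ x, resampledMean μ S f x ∂Measure.pi μ = ∫ x, f x ∂Measure.pi μ := by
  classical
  have hS := measurePreserving_piecewise μ S
  calc ∫ x, resampledMean μ S f x ∂Measure.pi μ
      = ∫ z, f (S.piecewise z.2 z.1) ∂(Measure.pi μ).prod (Measure.pi μ) :=
        (integral_prod _ (hS.integrable_comp_of_integrable hf)).symm
    _ = ∫ x, f x ∂Measure.map (fun z => S.piecewise z.2 z.1)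
          ((Measure.pi μ).prod (Measure.pi μ)) :=
        (integral_map hS.aemeasurable (hS.map_eq.symm ▸ hf.aestronglyMeasurable)).symm
    _ = ∫ x, f x ∂Measure.pi μ := by rw [hS.map_eq]

theorem measurable_resampledMean (S : Set ι) (hm : Measurable f) :
    Measurable (resampledMean μ S f) := by
  classical
  exact (hm.comp (measurable_piecewise_prod S)).stronglyMeasurable.integral_prod_right'.measurable

theorem hasBoundedDifferences_resampledMean [Finite κ] (hf : HasBoundedDifferences b f c)
    (hm : Measurable f) (S : Set ι) : HasBoundedDifferences b (resampledMean μ S f) c := by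
  classical
  intro j x y hxy
  have hint (x : ∀ i, Ω i) : Integrable (fun z => f (S.piecewise z x)) (Measure.pi μ) :=
    hf.integrable_comp hm ((measurable_piecewise_prod S).comp measurable_prodMk_left)
  have hdiff (z : ∀ i, Ω i) : ‖f (S.piecewise z x) - f (S.piecewise z y)‖ ≤ c j :=
    hf j _ _ fun i hi => by by_cases hiS : i ∈ S <;> simp [hiS, hxy i hi]
  rw [resampledMean, resampledMean, ← integral_sub (hint x) (hint y)]
  simpa using norm_integral_le_of_norm_le_const (μ := Measure.pi μ) (.of_forall hdiff)

/-- The martingale step: with the coordinates outside the block `j` fixed, `f` has oscillation at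
most `c j`, so that Hoeffding's lemma applies to its deviation from the conditional mean. -/
theorem HasBoundedDifferences.hasSubgaussianMGF_of_resampledMean [Finite κ] {a : ℝ≥0}
    (hf : HasBoundedDifferences b f c) (hm : Measurable f) (j : κ)
    (h : HasSubgaussianMGF (fun x => resampledMean μ (b ⁻¹' {j}) f x -
      ∫ x', resampledMean μ (b ⁻¹' {j}) f x' ∂Measure.pi μ) a (Measure.pi μ)) :
    HasSubgaussianMGF (fun x => f x - ∫ x', f x' ∂Measure.pi μ) (a + (c j / 2) ^ 2)
      (Measure.pi μ) := by
  classical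
  have hS := measurePreserving_piecewise μ (b ⁻¹' {j})
  have hcentered : Measurable fun x => f x - ∫ x', f x' ∂Measure.pi μ := hm.sub_const _
  have hident : IdentDistrib
      ((fun x => f x - ∫ x', f x' ∂Measure.pi μ) ∘ fun z => (b ⁻¹' {j}).piecewise z.2 z.1)
      (fun x => f x - ∫ x', f x' ∂Measure.pi μ)
      ((Measure.pi μ).prod (Measure.pi μ)) (Measure.pi μ) :=
    ⟨(hcentered.comp hS.measurable).aemeasurable, hcentered.aemeasurable, by
      rw [← Measure.map_map hcentered hS.measurable, hS.map_eq]⟩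
  rw [integral_resampledMean (f := f) _ (hf.integrable_comp hm measurable_id)] at h
  refine (hasSubgaussianMGF_prod (hcentered.comp hS.measurable).aestronglyMeasurable h
    (.of_forall fun x => ?_)).congr_identDistrib hident
  have hfiber := hasSubgaussianMGF_of_abs_sub_le (μ := Measure.pi μ) (c := c j)
    (f := fun y => f ((b ⁻¹' {j}).piecewise y x))
    (hm.comp (hS.measurable.comp measurable_prodMk_left)).aemeasurable
    fun y z => hf j _ _ fun i hi => by simp [hi]
  simpa only [Function.comp_apply, sub_sub_sub_cancel_right, resampledMean] using hfiber

theorem HasBoundedDifferences.hasSubgaussianMGF [Fintype κ] (hf : HasBoundedDifferences b f c)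
    (hm : Measurable f) :
    HasSubgaussianMGF (fun x => f x - ∫ x', f x' ∂Measure.pi μ) (∑ j, (c j / 2) ^ 2)
      (Measure.pi μ) := by
  classical
  suffices h : ∀ (s : Finset κ) (f : (∀ i, Ω i) → ℝ), HasBoundedDifferences b f c →
      Measurable f → DependsOn f (b ⁻¹' s) →
      HasSubgaussianMGF (fun x => f x - ∫ x', f x' ∂Measure.pi μ) (∑ j ∈ s, (c j / 2) ^ 2)
        (Measure.pi μ) from
    h _ f hf hm (by simpa using dependsOn_univ f)
  intro s
  induction s using Finset.induction_on with
  | empty =>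
    intro f _ _ hs
    have hconst (x y : ∀ i, Ω i) : f x = f y := hs (by simp)
    refine HasSubgaussianMGF.fun_zero.congr (.of_forall fun x => ?_)
    simp [hconst _ x]
  | insert j s hj ih =>
    intro f hf hm hs
    rw [Finset.sum_insert hj, add_comm]
    refine hf.hasSubgaussianMGF_of_resampledMean hm j
      (ih _ (hasBoundedDifferences_resampledMean hf hm _) (measurable_resampledMean _ hm)
        (dependsOn_resampledMean ?_))
    rwa [← Set.preimage_union, ← Set.insert_eq, ← Finset.coe_insert]

end BoundedDifferences

section VertexLipschitz

variable {V : Type*}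

/-- The vertex Lipschitz condition on a graph parameter: changing the edges at a single vertex `w`
changes the parameter by at most `1`. -/
def VertexLipschitz (F : SimpleGraph V → ℝ) : Prop :=
  ∀ (w : V) (G H : SimpleGraph V), (∀ u v, u ≠ w → v ≠ w → (G.Adj u v ↔ H.Adj u v)) →
    |F G - F H| ≤ 1

theorem colorable_succ_of_adj_imp {G H : SimpleGraph V} {k : ℕ} (w : V)
    (h : ∀ u v, u ≠ w → v ≠ w → H.Adj u v → G.Adj u v) (hG : G.Colorable k) :
    H.Colorable (k + 1) := by
  classical
  obtain ⟨C⟩ := hG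
  let C' : H.Coloring (Option (Fin k)) :=
    .mk (fun v => if v = w then none else some (C v)) fun {u v} huv => by
      by_cases hu : u = w <;> by_cases hv : v = w
      · exact absurd (hu.trans hv.symm) huv.ne
      all_goals simp only [hu, hv, if_true, if_false, ne_eq, reduceCtorEq, not_false_eq_true,
        Option.some.injEq]
      exact C.valid (h u v hu hv huv)
  simpa using C'.colorable

theorem vertexLipschitz_chromaticNumber [Finite V] :
    VertexLipschitz fun G : SimpleGraph V => (G.chromaticNumber.toNat : ℝ) := by
  cases nonempty_fintype V
  have hle (w : V) (G H : SimpleGraph V) (h : ∀ u v, u ≠ w → v ≠ w → H.Adj u v → G.Adj u v) :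
      (H.chromaticNumber.toNat : ℝ) ≤ G.chromaticNumber.toNat + 1 := by
    have hG := SimpleGraph.colorable_chromaticNumber G.colorable_of_fintype
    exact_mod_cast ENat.toNat_le_of_le_natCast
      (colorable_succ_of_adj_imp w h hG).chromaticNumber_le
  intro w G H hGH
  rw [abs_sub_le_iff]
  constructor
  · linarith [hle w H G fun u v hu hv => (hGH u v hu hv).1]
  · linarith [hle w G H fun u v hu hv => (hGH u v hu hv).2]

end VertexLipschitz

section RandomGraph

variable {n : ℕ}

theorem isProbabilityMeasure_bernoulliMeasure {p : ℝ} (hp0 : 0 ≤ p) (hp1 : p ≤ 1) :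
    IsProbabilityMeasure (bernoulliMeasure p) :=
  ⟨by simp [bernoulliMeasure, ← ENNReal.ofReal_add hp0 (sub_nonneg.2 hp1)]⟩

theorem graphOf_adj {ω : Sym2 (Fin n) → Bool} {u v : Fin n} :
    (graphOf ω).Adj u v ↔ u ≠ v ∧ ω s(u, v) = true := by
  simp [graphOf, SimpleGraph.fromRel_adj, Sym2.eq_swap (a := v)]

/-- Exposing the vertices in increasing order reveals the edge `s(u, v)` together with its larger
endpoint. The vertex `0` reveals only its own loop, hence the constant `0` there. -/
theorem VertexLipschitz.hasBoundedDifferences {F : SimpleGraph (Fin n) → ℝ}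
    (hF : VertexLipschitz F) :
    HasBoundedDifferences Sym2.sup (fun ω : Sym2 (Fin n) → Bool => F (graphOf ω))
      fun j => if (j : ℕ) = 0 then 0 else 1 := by
  intro j x y hxy
  beta_reduce
  have hadj (u v : Fin n) (huv : u ≠ v → max u v ≠ j) :
      (graphOf x).Adj u v ↔ (graphOf y).Adj u v := by
    simp only [graphOf_adj]
    exact and_congr_right fun hne => by rw [hxy s(u, v) (huv hne)]
  split_ifs with hj
  · have hgraph : graphOf x = graphOf y := by
      ext u v
      refine hadj u v fun hne hmax => hne ?_
      have := max_le_iff.1 hmax.le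
      omega
    simp [hgraph]
  · exact hF j _ _ fun u v hu hv => hadj u v fun _ => by
      rcases max_choice u v with h | h <;> rwa [h]

theorem VertexLipschitz.hasSubgaussianMGF {F : SimpleGraph (Fin n) → ℝ} (hF : VertexLipschitz F)
    (μ : Sym2 (Fin n) → Measure Bool) [∀ e, IsProbabilityMeasure (μ e)] :
    HasSubgaussianMGF (fun ω => F (graphOf ω) - ∫ ω', F (graphOf ω') ∂Measure.pi μ)
      ((n - 1 : ℕ) / 4) (Measure.pi μ) := by
  have hsum : ∑ j : Fin n, ((if (j : ℕ) = 0 then 0 else 1 : ℝ≥0) / 2) ^ 2 =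
      ((n - 1 : ℕ) : ℝ≥0) / 4 := by
    cases n with
    | zero => simp
    | succ n =>
      simp only [Fin.sum_univ_succ, Fin.val_zero, Fin.val_succ, if_true, Nat.add_eq_zero_iff,
        one_ne_zero, and_false, if_false, Finset.sum_const, Finset.card_univ, Fintype.card_fin,
        nsmul_eq_mul, add_tsub_cancel_right]
      field
  rw [← hsum]
  exact hF.hasBoundedDifferences.hasSubgaussianMGF (measurable_of_finite _)

end RandomGraph

theorem chromatic_number_concentration_general {n : ℕ} (μ : Sym2 (Fin n) → Measure Bool)
    [∀ e, IsProbabilityMeasure (μ e)] {lam : ℝ} (hlam : 0 ≤ lam) :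
    Measure.pi μ {ω | lam * √((n : ℝ) - 1) < |chi ω - ∫ ω', chi ω' ∂Measure.pi μ|} ≤
      ENNReal.ofReal (2 * exp (-2 * lam ^ 2)) := by
  have hscale : lam * √((n : ℝ) - 1) = 2 * lam * √(((n - 1 : ℕ) / 4 : ℝ≥0) : ℝ) := by
    have hsqrt : √((n : ℝ) - 1) = √((n - 1 : ℕ) : ℝ) := by
      cases n with
      | zero => simp [Real.sqrt_eq_zero_of_nonpos]
      | succ n => simp
    have hfour : √(4 : ℝ) = 2 := by
      rw [show (4 : ℝ) = 2 ^ 2 by norm_num, Real.sqrt_sq two_pos.le]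
    rw [hsqrt, NNReal.coe_div, NNReal.coe_natCast, NNReal.coe_ofNat,
      Real.sqrt_div (Nat.cast_nonneg _), hfour]
    ring
  rw [← ofReal_measureReal, hscale]
  refine ENNReal.ofReal_le_ofReal ((measureReal_mul_sqrt_lt_abs_le_of_hasSubgaussianMGF
    (vertexLipschitz_chromaticNumber.hasSubgaussianMGF μ) (by positivity)).trans_eq ?_)
  ring_nf

/-- **Concentration of the chromatic number** (Shamir–Spencer): for `G ~ G(n,p)`,
`Pr[|χ(G) - E[χ(G)]| > λ√(n-1)] < 2·exp(-λ²/2)`. -/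
theorem chromatic_number_concentration (n : ℕ) (p : ℝ) (hp0 : 0 ≤ p) (hp1 : p ≤ 1)
    {lam : ℝ} (hlam : 0 < lam) :
    gnp n p {ω | lam * Real.sqrt ((n : ℝ) - 1) < |chi ω - ∫ ω', chi ω' ∂(gnp n p)|} <
      ENNReal.ofReal (2 * Real.exp (-lam ^ 2 / 2)) := by
  have := isProbabilityMeasure_bernoulliMeasure hp0 hp1
  refine (chromatic_number_concentration_general _ hlam.le).trans_lt
    ((ENNReal.ofReal_lt_ofReal_iff (by positivity)).2 ?_)
  gcongr
  nlinarith [pow_pos hlam 2]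
end

section
/- Let c > 0 be constant, p = c/n, and G ~ G(n,p). Then the probability that G contains no triangle tends to exp(-c³/6) as n → ∞. -/
open MeasureTheory

/-!
Add the events of a family one at a time. Since `B i` is independent of its non-neighbours in a
dependency graph, the probability that none of the events in `insert i S` occurs is
`(1 - P(B i)) * P(none of S)` up to an error of at most the sum of `P(B i ∩ B j)` over the
neighbours `j` of `i`. The errors add up to the two-sided bound `|P(none) - M| ≤ Δ`, where
`M = ∏ i, (1 - P(B i))` and `Δ` is the sum appearing in Janson's inequality. This additive form
replaces Janson's exponential bound, and with it the Harris inequality.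

For triangles `M = (1 - p³) ^ (n choose 3)` tends to `exp (-c³ / 6)`. Two distinct triangles
sharing an edge share exactly one and so span five edges, and each triangle meets `O(n)` others
this way, whence `Δ = O(n⁴p⁵)` tends to `0`.
-/

open Asymptotics Filter Topology
open ProbabilityTheory (IndepSet iIndepFun_pi indepFun_iff_indepSet_preimage
  indepSet_iff_measure_inter_eq_mul tendsto_choose_mul_pow_atTop tendsto_zero_of_tendsto_mul_atTop)
open scoped Finset

section DependencyGraph

variable {Ω ι : Type*} {B : ι → Set Ω}

/-- The event that none of the events `B j` with `j ∈ S` occurs. -/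
def noneOccur (B : ι → Set Ω) (S : Finset ι) : Set Ω := ⋂ j ∈ S, (B j)ᶜ

lemma mem_noneOccur {S : Finset ι} {ω : Ω} : ω ∈ noneOccur B S ↔ ∀ j ∈ S, ω ∉ B j := by
  simp only [noneOccur, Set.mem_iInter, Set.mem_compl_iff]

lemma noneOccur_anti {S T : Finset ι} (h : S ⊆ T) : noneOccur B T ⊆ noneOccur B S :=
  Set.biInter_subset_biInter_left h

lemma noneOccur_insert [DecidableEq ι] (i : ι) (S : Finset ι) :
    noneOccur B (insert i S) = noneOccur B S \ B i := by
  rw [noneOccur, Finset.set_biInter_insert, Set.sdiff_eq, Set.inter_comm, noneOccur]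

variable [MeasurableSpace Ω] {μ : Measure Ω}

lemma measurableSet_noneOccur (hB : ∀ i, MeasurableSet (B i)) (S : Finset ι) :
    MeasurableSet (noneOccur B S) :=
  S.measurableSet_biInter fun i _ => (hB i).compl

lemma measureReal_noneOccur_insert [IsFiniteMeasure μ] [DecidableEq ι]
    (hB : ∀ i, MeasurableSet (B i)) (i : ι) (S : Finset ι) :
    μ.real (noneOccur B (insert i S)) =
      μ.real (noneOccur B S) - μ.real (B i ∩ noneOccur B S) := by
  rw [noneOccur_insert, eq_sub_iff_add_eq, Set.inter_comm,
    measureReal_sdiff_add_inter (hB i)]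

lemma measureReal_inter_noneOccur_filter_le [IsFiniteMeasure μ] (A : Set Ω) (S : Finset ι)
    (P : ι → Prop) [DecidablePred P] :
    μ.real (A ∩ noneOccur B {j ∈ S | ¬ P j}) ≤
      μ.real (A ∩ noneOccur B S) + ∑ j ∈ S with P j, μ.real (A ∩ B j) := by
  have hcover : A ∩ noneOccur B {j ∈ S | ¬ P j} ⊆
      A ∩ noneOccur B S ∪ ⋃ j ∈ ({j ∈ S | P j} : Finset ι), A ∩ B j := by
    rintro ω ⟨hA, hω⟩
    simp only [Set.mem_union, Set.mem_inter_iff, Set.mem_iUnion, Finset.mem_filter,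
      mem_noneOccur, exists_prop] at hω ⊢
    by_contra! h
    obtain ⟨j, hjS, hj⟩ := h.1 hA
    by_cases hP : P j
    · exact h.2 j ⟨hjS, hP⟩ hA hj
    · exact hω j ⟨hjS, hP⟩ hj
  calc μ.real (A ∩ noneOccur B {j ∈ S | ¬ P j})
      ≤ μ.real (A ∩ noneOccur B S ∪ ⋃ j ∈ ({j ∈ S | P j} : Finset ι), A ∩ B j) :=
        measureReal_mono hcover
    _ ≤ μ.real (A ∩ noneOccur B S)
          + μ.real (⋃ j ∈ ({j ∈ S | P j} : Finset ι), A ∩ B j) := measureReal_union_le _ _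
    _ ≤ μ.real (A ∩ noneOccur B S) + ∑ j ∈ S with P j, μ.real (A ∩ B j) := by
        gcongr; exact measureReal_biUnion_finset_le _ _

/-- `G` is a dependency graph of the family of events `B`: each `B i` is independent of its
non-neighbours. Independence is only required from the event that none of finitely many
non-neighbours occurs, which is weaker than independence from the σ-algebra they generate. -/
def IsDependencyGraph (μ : Measure Ω) (B : ι → Set Ω) (G : SimpleGraph ι) : Prop :=
  ∀ ⦃i : ι⦄ ⦃S : Finset ι⦄, i ∉ S → (∀ j ∈ S, ¬ G.Adj i j) → IndepSet (B i) (noneOccur B S) μ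

/-- The sum `Δ` of Janson's inequality: the probabilities of `B i ∩ B j` summed over the ordered
pairs of adjacent indices in `S`, so that each edge of the dependency graph `G` counts twice. -/
noncomputable def jansonDelta (μ : Measure Ω) (B : ι → Set Ω) (G : SimpleGraph ι)
    [DecidableRel G.Adj] (S : Finset ι) : ℝ :=
  ∑ i ∈ S, ∑ j ∈ S with G.Adj i j, μ.real (B i ∩ B j)

variable {G : SimpleGraph ι}

lemma IsDependencyGraph.measureReal_inter_noneOccur [IsZeroOrProbabilityMeasure μ]
    (hG : IsDependencyGraph μ B G) (hB : ∀ i, MeasurableSet (B i)) (i : ι) {S : Finset ι}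
    (hi : i ∉ S) (hS : ∀ j ∈ S, ¬ G.Adj i j) :
    μ.real (B i ∩ noneOccur B S) = μ.real (B i) * μ.real (noneOccur B S) := by
  rw [measureReal_def, (indepSet_iff_measure_inter_eq_mul (hB i) (measurableSet_noneOccur hB S) μ).1
    (hG hi hS), ENNReal.toReal_mul, measureReal_def, measureReal_def]

variable [DecidableRel G.Adj]

lemma jansonDelta_add_sum_le_jansonDelta_insert [DecidableEq ι] {i : ι} {S : Finset ι}
    (hi : i ∉ S) :
    jansonDelta μ B G S + ∑ j ∈ S with G.Adj i j, μ.real (B i ∩ B j) ≤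
      jansonDelta μ B G (insert i S) := by
  rw [jansonDelta, jansonDelta, Finset.sum_insert hi, add_comm]
  gcongr <;> exact Finset.subset_insert _ S

variable [IsProbabilityMeasure μ]

lemma IsDependencyGraph.abs_measureReal_noneOccur_insert_sub_le [DecidableEq ι]
    (hG : IsDependencyGraph μ B G) (hB : ∀ i, MeasurableSet (B i))
    (hcorr : ∀ i j, G.Adj i j → μ.real (B i) * μ.real (B j) ≤ μ.real (B i ∩ B j))
    {i : ι} {S : Finset ι} (hi : i ∉ S) :
    |μ.real (noneOccur B (insert i S)) - (1 - μ.real (B i)) * μ.real (noneOccur B S)| ≤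
      ∑ j ∈ S with G.Adj i j, μ.real (B i ∩ B j) := by
  let N : Finset ι := {j ∈ S | ¬ G.Adj i j}
  have hNS : noneOccur B S ⊆ noneOccur B N := noneOccur_anti (Finset.filter_subset _ S)
  have hindep : μ.real (B i ∩ noneOccur B N) = μ.real (B i) * μ.real (noneOccur B N) :=
    hG.measureReal_inter_noneOccur hB i (mt (Finset.mem_of_mem_filter i) hi)
      fun _ hj => (Finset.mem_filter.1 hj).2
  have hlower : μ.real (B i) * μ.real (noneOccur B S) ≤
      μ.real (B i ∩ noneOccur B S) + ∑ j ∈ S with G.Adj i j, μ.real (B i ∩ B j) :=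
    calc μ.real (B i) * μ.real (noneOccur B S)
        ≤ μ.real (B i) * μ.real (noneOccur B N) := by gcongr; finiteness
      _ = μ.real (B i ∩ noneOccur B N) := hindep.symm
      _ ≤ _ := measureReal_inter_noneOccur_filter_le (B i) S (G.Adj i)
  have hupper : μ.real (B i ∩ noneOccur B S) ≤
      μ.real (B i) * μ.real (noneOccur B S) + ∑ j ∈ S with G.Adj i j, μ.real (B i ∩ B j) :=
    calc μ.real (B i ∩ noneOccur B S)
        ≤ μ.real (B i ∩ noneOccur B N) := by gcongr; finiteness
      _ = μ.real (B i) * μ.real (noneOccur B N) := hindep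
      _ ≤ μ.real (B i) * (μ.real (noneOccur B S) + ∑ j ∈ S with G.Adj i j, μ.real (B j)) := by
          gcongr
          simpa only [Set.univ_inter] using
            measureReal_inter_noneOccur_filter_le Set.univ S (G.Adj i)
      _ ≤ _ := by
          rw [mul_add, Finset.mul_sum]
          gcongr with j hj
          exact hcorr i j (Finset.mem_filter.1 hj).2
  rw [measureReal_noneOccur_insert hB, abs_le]
  constructor <;> linarith

theorem IsDependencyGraph.abs_measureReal_noneOccur_sub_prod_le
    (hG : IsDependencyGraph μ B G) (hB : ∀ i, MeasurableSet (B i))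
    (hcorr : ∀ i j, G.Adj i j → μ.real (B i) * μ.real (B j) ≤ μ.real (B i ∩ B j)) (S : Finset ι) :
    |μ.real (noneOccur B S) - ∏ i ∈ S, (1 - μ.real (B i))| ≤ jansonDelta μ B G S := by
  classical
  induction S using Finset.induction_on with
  | empty => simp [noneOccur, jansonDelta]
  | insert i S hi ih =>
    rw [Finset.prod_insert hi]
    calc |μ.real (noneOccur B (insert i S))
          - (1 - μ.real (B i)) * ∏ j ∈ S, (1 - μ.real (B j))|
        ≤ |μ.real (noneOccur B (insert i S)) - (1 - μ.real (B i)) * μ.real (noneOccur B S)|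
          + |(1 - μ.real (B i)) * μ.real (noneOccur B S)
            - (1 - μ.real (B i)) * ∏ j ∈ S, (1 - μ.real (B j))| := abs_sub_le _ _ _
      _ = |μ.real (noneOccur B (insert i S)) - (1 - μ.real (B i)) * μ.real (noneOccur B S)|
          + (1 - μ.real (B i)) * |μ.real (noneOccur B S) - ∏ j ∈ S, (1 - μ.real (B j))| := by
          rw [← mul_sub, abs_mul, abs_of_nonneg (sub_nonneg.2 measureReal_le_one)]
      _ ≤ ∑ j ∈ S with G.Adj i j, μ.real (B i ∩ B j) + jansonDelta μ B G S := by
          gcongr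
          · exact hG.abs_measureReal_noneOccur_insert_sub_le hB hcorr hi
          · exact (mul_le_of_le_one_left (abs_nonneg _)
              (sub_le_self _ measureReal_nonneg)).trans ih
      _ ≤ jansonDelta μ B G (insert i S) := by
          rw [add_comm]; exact jansonDelta_add_sum_le_jansonDelta_insert hi

end DependencyGraph

section Bernoulli

lemma indepSet_pi_of_dependsOn {E : Type*} [Fintype E] {X : E → Type*}
    [∀ e, MeasurableSpace (X e)] [∀ e, Countable (X e)] [∀ e, MeasurableSingletonClass (X e)]
    (ν : ∀ e, Measure (X e)) [∀ e, IsProbabilityMeasure (ν e)] {A B : Set (∀ e, X e)}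
    {U V : Finset E} (hUV : Disjoint U V) (hA : DependsOn (· ∈ A) U)
    (hB : DependsOn (· ∈ B) V) : IndepSet A B (Measure.pi ν) := by
  obtain ⟨f, hf⟩ := dependsOn_iff_exists_comp.1 hA
  obtain ⟨g, hg⟩ := dependsOn_iff_exists_comp.1 hB
  have hA' : A = (fun ω (e : U) => ω e) ⁻¹' {x | f x} := Set.ext fun ω => (congrFun hf ω).to_iff
  have hB' : B = (fun ω (e : V) => ω e) ⁻¹' {x | g x} := Set.ext fun ω => (congrFun hg ω).to_iff
  have hcoord := iIndepFun_pi (μ := ν) (X := fun _ x => x) fun _ => aemeasurable_id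
  have hres := hcoord.indepFun_finset U V hUV fun e => measurable_pi_apply e
  rw [indepFun_iff_indepSet_preimage (by fun_prop) (by fun_prop)] at hres
  rw [hA', hB']
  exact hres _ _ .of_discrete .of_discrete

variable {E ι : Type*}

/-- The event that a random edge set, encoded by its indicator function, contains `T`. -/
def containsEvent (T : Finset E) : Set (E → Bool) := {ω | ∀ e ∈ T, ω e = true}

/-- The graph joining the indices of two overlapping members of a family of finsets. -/
def overlapGraph (T : ι → Finset E) : SimpleGraph ι where
  Adj i j := i ≠ j ∧ ¬ Disjoint (T i) (T j)
  symm := ⟨fun _ _ h => ⟨h.1.symm, fun hd => h.2 hd.symm⟩⟩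
  loopless := ⟨fun _ h => h.1 rfl⟩

lemma overlapGraph_adj {T : ι → Finset E} {i j : ι} :
    (overlapGraph T).Adj i j ↔ i ≠ j ∧ ¬ Disjoint (T i) (T j) := Iff.rfl

lemma containsEvent_inter [DecidableEq E] (T U : Finset E) :
    containsEvent T ∩ containsEvent U = containsEvent (T ∪ U) :=
  Set.ext fun _ => Finset.forall_mem_union.symm

lemma dependsOn_mem_containsEvent (T : Finset E) : DependsOn (· ∈ containsEvent T) T :=
  fun _ _ h => propext <| forall₂_congr fun e he => by rw [h e he]

lemma dependsOn_mem_noneOccur_containsEvent [DecidableEq E] (T : ι → Finset E) (S : Finset ι) :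
    DependsOn (· ∈ noneOccur (fun i => containsEvent (T i)) S) (S.biUnion T) := by
  intro ω ω' h
  simp only [mem_noneOccur]
  refine propext <| forall₂_congr fun j hj => not_congr (Eq.to_iff ?_)
  exact dependsOn_mem_containsEvent (T j) fun e he =>
    h e (Finset.subset_biUnion_of_mem T hj he)

lemma isProbabilityMeasure_bernoulliMeasure_s19 {p : ℝ} (hp₀ : 0 ≤ p) (hp₁ : p ≤ 1) :
    IsProbabilityMeasure (bernoulliMeasure p) where
  measure_univ := by
    simp [bernoulliMeasure, ← ENNReal.ofReal_add hp₀ (sub_nonneg.2 hp₁)]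

lemma bernoulliMeasure_singleton_true (p : ℝ) :
    bernoulliMeasure p {true} = ENNReal.ofReal p := by
  simp [bernoulliMeasure]

variable [Fintype E] {p : ℝ}

/-- The law of a `p`-random subset of `E`, encoded by its indicator function. -/
noncomputable def bernoulliPi (E : Type*) [Fintype E] (p : ℝ) : Measure (E → Bool) :=
  Measure.pi fun _ => bernoulliMeasure p

lemma isProbabilityMeasure_bernoulliPi (hp₀ : 0 ≤ p) (hp₁ : p ≤ 1) :
    IsProbabilityMeasure (bernoulliPi E p) := by
  have := isProbabilityMeasure_bernoulliMeasure_s19 hp₀ hp₁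
  unfold bernoulliPi; infer_instance

lemma bernoulliPi_real_containsEvent (hp₀ : 0 ≤ p) (hp₁ : p ≤ 1) (T : Finset E) :
    (bernoulliPi E p).real (containsEvent T) = p ^ #T := by
  classical
  have := isProbabilityMeasure_bernoulliMeasure_s19 hp₀ hp₁
  have hpi : containsEvent T = Set.univ.pi fun e => if e ∈ T then {true} else Set.univ := by
    ext ω
    simp only [containsEvent, Set.mem_ofPred_eq, Set.mem_univ_pi]
    exact forall_congr' fun e => by split_ifs <;> simp_all
  have hcoord (e : E) : bernoulliMeasure p (if e ∈ T then {true} else Set.univ) =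
      if e ∈ T then ENNReal.ofReal p else 1 := by
    split_ifs
    exacts [bernoulliMeasure_singleton_true p, measure_univ]
  rw [measureReal_def, hpi, bernoulliPi, Measure.pi_pi]
  simp_rw [hcoord]
  rw [Finset.prod_ite_mem, Finset.univ_inter, Finset.prod_const, ENNReal.toReal_pow,
    ENNReal.toReal_ofReal hp₀]

lemma isDependencyGraph_overlapGraph (hp₀ : 0 ≤ p) (hp₁ : p ≤ 1) (T : ι → Finset E) :
    IsDependencyGraph (bernoulliPi E p) (fun i => containsEvent (T i)) (overlapGraph T) := by
  classical
  have := isProbabilityMeasure_bernoulliMeasure_s19 hp₀ hp₁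
  intro i S hi hS
  refine indepSet_pi_of_dependsOn _ ?_ (dependsOn_mem_containsEvent (T i))
    (dependsOn_mem_noneOccur_containsEvent T S)
  rw [Finset.disjoint_biUnion_right]
  intro j hj
  by_contra hdisj
  exact hS j hj (overlapGraph_adj.2 ⟨(ne_of_mem_of_not_mem hj hi).symm, hdisj⟩)

theorem abs_bernoulliPi_real_noneOccur_containsEvent_sub_prod_le [DecidableEq E]
    (hp₀ : 0 ≤ p) (hp₁ : p ≤ 1) (T : ι → Finset E) [DecidableRel (overlapGraph T).Adj]
    (S : Finset ι) :
    |(bernoulliPi E p).real (noneOccur (fun i => containsEvent (T i)) S)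
        - ∏ i ∈ S, (1 - p ^ #(T i))| ≤
      ∑ i ∈ S, ∑ j ∈ S with (overlapGraph T).Adj i j, p ^ #(T i ∪ T j) := by
  have := isProbabilityMeasure_bernoulliPi (E := E) hp₀ hp₁
  have hprob := bernoulliPi_real_containsEvent (E := E) hp₀ hp₁
  have h := (isDependencyGraph_overlapGraph hp₀ hp₁ T).abs_measureReal_noneOccur_sub_prod_le
    (fun _ => (Set.toFinite _).measurableSet) (fun i j _ => ?_) S
  · simpa only [jansonDelta, containsEvent_inter, hprob] using h
  · rw [containsEvent_inter, hprob, hprob, hprob, ← pow_add]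
    exact pow_le_pow_of_le_one hp₀ hp₁ (Finset.card_union_le _ _)

end Bernoulli

section CliqueEdges

variable {V : Type*} [DecidableEq V]

/-- The pairs of distinct elements of `s`, that is, the edges of the complete graph on `s`. -/
def cliqueEdges (s : Finset V) : Finset (Sym2 V) := {e ∈ s.sym2 | ¬ e.IsDiag}

lemma mk_mem_cliqueEdges {s : Finset V} {a b : V} :
    s(a, b) ∈ cliqueEdges s ↔ (a ∈ s ∧ b ∈ s) ∧ a ≠ b := by
  rw [cliqueEdges, Finset.mem_filter, Finset.mk_mem_sym2_iff, Sym2.mk_isDiag_iff]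

lemma card_cliqueEdges (s : Finset V) : #(cliqueEdges s) = (#s).choose 2 := by
  rw [← Sym2.card_image_offDiag, cliqueEdges, Finset.sym2_eq_image, Sym2.filter_image_mk_not_isDiag]

lemma cliqueEdges_inter (s t : Finset V) : cliqueEdges s ∩ cliqueEdges t = cliqueEdges (s ∩ t) := by
  ext ⟨a, b⟩
  simp only [Finset.mem_inter, mk_mem_cliqueEdges]
  tauto

lemma disjoint_cliqueEdges_iff {s t : Finset V} :
    Disjoint (cliqueEdges s) (cliqueEdges t) ↔ #(s ∩ t) < 2 := by
  rw [Finset.disjoint_iff_inter_eq_empty, cliqueEdges_inter, ← Finset.card_eq_zero,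
    card_cliqueEdges, Nat.choose_eq_zero_iff]

lemma card_inter_lt_of_card_eq_of_ne {s t : Finset V} (hst : #s = #t) (hne : s ≠ t) :
    #(s ∩ t) < #s := by
  refine Finset.card_lt_card <| Finset.inter_subset_left.ssubset_of_ne fun h => hne ?_
  exact Finset.eq_of_subset_of_card_le (Finset.inter_eq_left.1 h) hst.ge

lemma five_le_card_cliqueEdges_union {s t : Finset V} (hs : #s = 3) (ht : #t = 3) (hne : s ≠ t) :
    5 ≤ #(cliqueEdges s ∪ cliqueEdges t) := by
  have hinter : (#(s ∩ t)).choose 2 ≤ Nat.choose 2 2 :=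
    Nat.choose_le_choose 2 <| Nat.le_of_lt_succ <|
      (card_inter_lt_of_card_eq_of_ne (hs.trans ht.symm) hne).trans_eq hs
  have hunion := Finset.card_union_add_card_inter (cliqueEdges s) (cliqueEdges t)
  rw [cliqueEdges_inter, card_cliqueEdges, card_cliqueEdges, card_cliqueEdges, hs, ht] at hunion
  simp only [Nat.choose_self, show Nat.choose 3 2 = 3 from rfl] at hinter hunion
  omega

lemma card_filter_le_card_inter_le [Fintype V] (s : Finset V) (k : ℕ) :
    #{t ∈ Finset.univ.powersetCard (k + 1) | k ≤ #(s ∩ t)} ≤ (#s).choose k * Fintype.card V := by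
  -- Such a `t` arises from a `k`-subset of `s ∩ t` by adding one further vertex.
  have hsub : ({t ∈ Finset.univ.powersetCard (k + 1) | k ≤ #(s ∩ t)} : Finset (Finset V)) ⊆
      (s.powersetCard k ×ˢ (Finset.univ : Finset V)).image fun x => insert x.2 x.1 := by
    intro t ht
    rw [Finset.mem_filter, Finset.mem_powersetCard_univ] at ht
    obtain ⟨u, hu, hcard⟩ := Finset.exists_subset_card_eq ht.2
    obtain ⟨v, -, hv⟩ := Finset.exists_eq_insert_iff.2
      ⟨hu.trans Finset.inter_subset_right, hcard ▸ ht.1.symm⟩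
    have hus : u ∈ s.powersetCard k :=
      Finset.mem_powersetCard.2 ⟨hu.trans Finset.inter_subset_left, hcard⟩
    exact Finset.mem_image.2 ⟨(u, v), Finset.mk_mem_product hus (Finset.mem_univ v), hv⟩
  calc #{t ∈ Finset.univ.powersetCard (k + 1) | k ≤ #(s ∩ t)}
      ≤ #(s.powersetCard k ×ˢ (Finset.univ : Finset V)) :=
        (Finset.card_le_card hsub).trans Finset.card_image_le
    _ = (#s).choose k * Fintype.card V := by
        rw [Finset.card_product, Finset.card_powersetCard, Finset.card_univ]

variable [Fintype V] [DecidableRel (overlapGraph (cliqueEdges (V := V))).Adj]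

lemma card_filter_overlapGraph_adj_le {s : Finset V} (hs : #s = 3) :
    #{t ∈ Finset.univ.powersetCard 3 | (overlapGraph cliqueEdges).Adj s t} ≤
      3 * Fintype.card V := by
  calc #{t ∈ Finset.univ.powersetCard 3 | (overlapGraph cliqueEdges).Adj s t}
      ≤ #{t ∈ Finset.univ.powersetCard 3 | 2 ≤ #(s ∩ t)} :=
        Finset.card_le_card <| Finset.monotone_filter_right _ fun t _ hst =>
          not_lt.1 (mt disjoint_cliqueEdges_iff.2 (overlapGraph_adj.1 hst).2)
    _ ≤ (#s).choose 2 * Fintype.card V := card_filter_le_card_inter_le s 2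
    _ = 3 * Fintype.card V := by rw [hs]; rfl

lemma sum_overlapGraph_adj_pow_card_union_le {p : ℝ} (hp₀ : 0 ≤ p) (hp₁ : p ≤ 1) {s : Finset V}
    (hs : #s = 3) :
    ∑ t ∈ Finset.univ.powersetCard 3 with (overlapGraph cliqueEdges).Adj s t,
        p ^ #(cliqueEdges s ∪ cliqueEdges t) ≤
      3 * Fintype.card V * p ^ 5 := by
  calc ∑ t ∈ Finset.univ.powersetCard 3 with (overlapGraph cliqueEdges).Adj s t,
        p ^ #(cliqueEdges s ∪ cliqueEdges t)
      ≤ #{t ∈ Finset.univ.powersetCard 3 | (overlapGraph cliqueEdges).Adj s t} • p ^ 5 := by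
        refine Finset.sum_le_card_nsmul _ _ _ fun t ht => ?_
        obtain ⟨ht, hst⟩ := Finset.mem_filter.1 ht
        exact pow_le_pow_of_le_one hp₀ hp₁ (five_le_card_cliqueEdges_union hs
          (Finset.mem_powersetCard_univ.1 ht) (overlapGraph_adj.1 hst).1)
    _ ≤ 3 * Fintype.card V * p ^ 5 := by
        rw [nsmul_eq_mul]
        gcongr
        exact_mod_cast card_filter_overlapGraph_adj_le hs

end CliqueEdges

section RandomGraph

variable {n : ℕ}

lemma isClique_graphOf_iff (ω : Sym2 (Fin n) → Bool) (s : Finset (Fin n)) :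
    (graphOf ω).IsClique s ↔ ω ∈ containsEvent (cliqueEdges s) := by
  have hadj (a b : Fin n) : (graphOf ω).Adj a b ↔ a ≠ b ∧ ω s(a, b) = true := by
    rw [graphOf, SimpleGraph.fromRel_adj, Sym2.eq_swap (a := b), or_self]
  simp only [containsEvent, Set.mem_ofPred_eq, Sym2.forall, mk_mem_cliqueEdges,
    SimpleGraph.isClique_iff, Set.Pairwise, hadj, SetLike.mem_coe]
  grind

lemma setOf_cliqueFree_graphOf (n r : ℕ) :
    {ω : Sym2 (Fin n) → Bool | (graphOf ω).CliqueFree r} =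
      noneOccur (fun s => containsEvent (cliqueEdges s)) (Finset.univ.powersetCard r) := by
  ext ω
  simp only [Set.mem_ofPred_eq, mem_noneOccur, Finset.mem_powersetCard_univ,
    SimpleGraph.CliqueFree, SimpleGraph.isNClique_iff, isClique_graphOf_iff, not_and']

lemma abs_gnp_cliqueFree_three_sub_le (n : ℕ) {p : ℝ} (hp₀ : 0 ≤ p) (hp₁ : p ≤ 1) :
    |(gnp n p).real {ω | (graphOf ω).CliqueFree 3} - (1 - p ^ 3) ^ n.choose 3| ≤
      n.choose 3 * (3 * n * p ^ 5) := by
  classical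
  let triples : Finset (Finset (Fin n)) := Finset.univ.powersetCard 3
  have htriples : #triples = n.choose 3 := by
    rw [Finset.card_powersetCard, Finset.card_univ, Fintype.card_fin]
  have hprod : ∏ s ∈ triples, (1 - p ^ #(cliqueEdges s)) = (1 - p ^ 3) ^ n.choose 3 := by
    rw [← htriples]
    exact Finset.prod_eq_pow_card fun s hs => by
      rw [card_cliqueEdges, Finset.mem_powersetCard_univ.1 hs]; rfl
  rw [setOf_cliqueFree_graphOf, ← hprod]
  calc _ ≤ ∑ s ∈ triples, ∑ t ∈ triples with (overlapGraph cliqueEdges).Adj s t,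
          p ^ #(cliqueEdges s ∪ cliqueEdges t) :=
        abs_bernoulliPi_real_noneOccur_containsEvent_sub_prod_le hp₀ hp₁ cliqueEdges triples
    _ ≤ #triples • (3 * Fintype.card (Fin n) * p ^ 5) :=
        Finset.sum_le_card_nsmul _ _ _ fun s hs =>
          sum_overlapGraph_adj_pow_card_union_le hp₀ hp₁ (Finset.mem_powersetCard_univ.1 hs)
    _ = n.choose 3 * (3 * n * p ^ 5) := by rw [htriples, nsmul_eq_mul, Fintype.card_fin]

end RandomGraph

section Asymptotics

lemma isEquivalent_log_one_add : (fun x : ℝ => Real.log (1 + x)) ~[𝓝 0] fun x => x := by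
  have h := hasDerivAt_iff_isLittleO_nhds_zero.1 (Real.hasDerivAt_log one_ne_zero)
  simpa [IsEquivalent, Pi.sub_def] using h

lemma tendsto_one_add_pow_exp {α : Type*} {l : Filter α} {m : α → ℕ} {x : α → ℝ} {t : ℝ}
    (hx : Tendsto x l (𝓝 0)) (hmx : Tendsto (fun a => m a * x a) l (𝓝 t)) :
    Tendsto (fun a => (1 + x a) ^ m a) l (𝓝 (Real.exp t)) := by
  have hlog : Tendsto (fun a => m a * Real.log (1 + x a)) l (𝓝 t) :=
    (IsEquivalent.refl.mul (isEquivalent_log_one_add.comp_tendsto hx)).symm.tendsto_nhds hmx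
  refine ((Real.continuous_exp.tendsto t).comp hlog).congr' ?_
  filter_upwards [hx.eventually_const_lt (neg_lt_zero.2 one_pos)] with a ha
  rw [Function.comp_apply, Real.exp_nat_mul, Real.exp_log (by linarith)]

variable {p : ℕ → ℝ} {c : ℝ}

lemma tendsto_one_sub_cube_pow_choose (hp : Tendsto (fun n => n * p n) atTop (𝓝 c)) :
    Tendsto (fun n => (1 - p n ^ 3) ^ n.choose 3) atTop (𝓝 (Real.exp (-c ^ 3 / 6))) := by
  have hcube : Tendsto (fun n => -p n ^ 3) atTop (𝓝 0) := by
    simpa using ((tendsto_zero_of_tendsto_mul_atTop hp).pow 3).neg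
  have hmean : Tendsto (fun n => n.choose 3 * -p n ^ 3) atTop (𝓝 (-c ^ 3 / 6)) := by
    simpa [Nat.factorial, neg_div] using (tendsto_choose_mul_pow_atTop 3 hp).neg
  exact tendsto_one_add_pow_exp hcube hmean

lemma tendsto_choose_three_mul_pow_five (hp : Tendsto (fun n => n * p n) atTop (𝓝 c)) :
    Tendsto (fun n => n.choose 3 * (3 * n * p n ^ 5)) atTop (𝓝 0) := by
  have h := ((tendsto_choose_mul_pow_atTop 3 hp).mul (hp.const_mul 3)).mul
    (tendsto_zero_of_tendsto_mul_atTop hp)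
  rw [mul_zero] at h
  exact h.congr fun n => by ring

theorem triangle_free_probability_general (hp₀ : ∀ᶠ n in atTop, 0 ≤ p n)
    (hp : Tendsto (fun n => n * p n) atTop (𝓝 c)) :
    Tendsto (fun n => (gnp n (p n) {ω | (graphOf ω).CliqueFree 3}).toReal) atTop
      (𝓝 (Real.exp (-c ^ 3 / 6))) := by
  have hp₁ : ∀ᶠ n in atTop, p n ≤ 1 :=
    (tendsto_zero_of_tendsto_mul_atTop hp).eventually_le_const one_pos
  have herr : Tendsto (fun n => (gnp n (p n)).real {ω | (graphOf ω).CliqueFree 3}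
      - (1 - p n ^ 3) ^ n.choose 3) atTop (𝓝 0) := by
    refine squeeze_zero_norm' ?_ (tendsto_choose_three_mul_pow_five hp)
    filter_upwards [hp₀, hp₁] with n hn₀ hn₁
    exact abs_gnp_cliqueFree_three_sub_le n hn₀ hn₁
  simpa [measureReal_def] using herr.add (tendsto_one_sub_cube_pow_choose hp)

end Asymptotics

/-- For `p = c/n` with `c > 0` constant, the probability that `G ~ G(n,p)` contains no
triangle tends to `exp(-c³/6)` as `n → ∞`. -/
theorem triangle_free_probability (c : ℝ) (hc : 0 < c) :
    Filter.Tendsto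
      (fun n : ℕ => (gnp n (c / n) {ω | (graphOf ω).CliqueFree 3}).toReal)
      Filter.atTop (nhds (Real.exp (-c ^ 3 / 6))) := by
  refine triangle_free_probability_general (.of_forall fun n => by positivity) ?_
  exact tendsto_const_nhds.congr' <| (eventually_ne_atTop 0).mono fun n hn => by field_simp
end
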